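/- Let {A',A''} be a nontrivial partition of A and Ã'' = {a'' ∈ A'' : ρ(a'') > ρ(a')·Π(a',a'') for all a' ∈ A'}. If Ã'' = ∅, then Φ_ρ(A'',A') = Φ_ρ(A',A'') = ρ(A'') = sup_{a∈A''} ρ(a). -/

import Mathlib

open Filter Topology Metric Set MeasureTheory
open scoped NNReal

noncomputable section

/-- A deviability density on a topological space `E`. -/
def IsDeviabilityDensity {E : Type*} [TopologicalSpace E] (p : E → ℝ) : Prop :=
  (∀ x, p x ∈ Set.Icc (0:ℝ) 1) ∧ (⨆ x, p x) = 1 ∧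
    ∀ γ ∈ Set.Ioc (0:ℝ) 1, IsCompact {x | γ ≤ p x}

variable {S : Type*} [MetricSpace S]

/-- Time shift `θ_s` on continuous paths. -/
def pshift (s : ℝ≥0) (X : C(ℝ≥0, S)) : C(ℝ≥0, S) :=
  ⟨fun t => X (s + t), X.continuous.comp (continuous_const.add continuous_id)⟩

/-- `Π_{x,t}(y)`. -/
def transDen (Px : S → C(ℝ≥0, S) → ℝ) (x : S) (t : ℝ≥0) (y : S) : ℝ :=
  ⨆ X ∈ {X : C(ℝ≥0, S) | X t = y}, Px x X

/-- The standing assumptions (2.2)--(2.5) of the paper, together with the basic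
assumptions on the family of path deviability densities `Px` and the set `A`. -/
structure DevSetup (S : Type*) [MetricSpace S] (Px : S → C(ℝ≥0, S) → ℝ) (A : Set S) :
    Prop where
  dev : ∀ x, IsDeviabilityDensity (Px x)
  start : ∀ x (X : C(ℝ≥0, S)), X 0 ≠ x → Px x X = 0
  /-- (2.2) upper semicontinuity -/
  usc : UpperSemicontinuous (fun q : S × C(ℝ≥0, S) => Px q.1 q.2)
  /-- (2.2) uniform upper compactness -/
  cpt : ∀ K : Set S, IsCompact K → ∀ γ ∈ Set.Ioc (0:ℝ) 1,
    IsCompact (⋃ x ∈ K, {X : C(ℝ≥0, S) | γ ≤ Px x X})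
  /-- (2.3) the maxitive Markov property -/
  markov : ∀ x (X : C(ℝ≥0, S)) (s : ℝ≥0),
    Px x X = (⨆ X' ∈ {X' : C(ℝ≥0, S) | ∀ u ≤ s, X' u = X u}, Px x X') *
      Px (X s) (pshift s X)
  /-- (2.4) `A` is locally finite -/
  locFin : ∀ K : Set S, IsCompact K → (K ∩ A).Finite
  /-- (2.4)(i) -/
  attract : ∀ x (X : C(ℝ≥0, S)), Px x X = 1 → (⨅ t : ℝ≥0, infDist (X t) A) = 0
  /-- (2.4)(ii) -/
  equil : ∀ a ∈ A, Px a (ContinuousMap.const ℝ≥0 a) = 1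
  /-- (2.4)(iii) -/
  connect : ∀ a ∈ A, ∀ a' ∈ A, ∃ t : ℝ≥0, 0 < t ∧ 0 < transDen Px a t a'
  /-- (2.4)(iv) -/
  nearA : ∀ ε : ℝ, 0 < ε → ∃ δ : ℝ, 0 < δ ∧ ∀ x : S, infDist x A < δ →
    ∃ s₀ s₁ : ℝ≥0, 0 < s₀ ∧ 0 < s₁ ∧ ∃ a ∈ A,
      1 - ε < transDen Px x s₀ a ∧ 1 - ε < transDen Px a s₁ x
  /-- (2.4)(v) -/
  localMove : ∀ x : S, ∀ ε : ℝ, 0 < ε → ∃ δ : ℝ, 0 < δ ∧ ∃ t₀ t₁ : ℝ≥0,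
    ∀ x' : S, dist x x' < δ →
      1 - ε < transDen Px x t₀ x' ∧ 1 - ε < transDen Px x' t₁ x
  /-- (2.5) uniform tightness -/
  tight : ∀ K₁ : Set S, IsCompact K₁ → ∀ ε : ℝ, 0 < ε → ∃ K₂ : Set S, IsCompact K₂ ∧
    Filter.limsup (fun t : ℝ≥0 => ⨆ x ∈ K₁, ⨆ y ∈ K₂ᶜ, transDen Px x t y) atTop < ε

/-- LD convergence at the given rate of a sequence of Borel probability measures to a
deviability density. -/
def LDConv {E : Type*} [TopologicalSpace E] [MeasurableSpace E]
    (Q : ℕ → Measure E) (rate : ℕ → ℕ) (p : E → ℝ) : Prop :=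
  ∀ f : E → ℝ, Continuous f → (∀ x, 0 ≤ f x) → BddAbove (Set.range f) →
    Tendsto (fun n => (∫ x, (f x) ^ (rate n) ∂(Q n)) ^ ((rate n : ℝ)⁻¹)) atTop
      (𝓝 (⨆ x, f x * p x))

variable [MeasurableSpace S] [BorelSpace S]

/-- The max flux `Φ_ρ(Γ,Γ')` relative to the limiting transition density `PL`. -/
def maxFlux (PL : S → S → ℝ) (ρ : S → ℝ) (Γ Γ' : Set S) : ℝ :=
  ⨆ x ∈ Γ, ρ x * ⨆ y ∈ Γ', PL x y

/-- `Φ_ρ(Γ, x)`, the max flux into a point. -/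
def maxFluxPt (PL : S → S → ℝ) (ρ : S → ℝ) (Γ : Set S) (x : S) : ℝ :=
  ⨆ a ∈ Γ, ρ a * PL a x

/-!
Let `u x = Π(x,A')`, `r = ρ(A'')` and `c = Φ_ρ(A'',A')`; since `ρ(x) Π(x,y) ≤ ρ(y)`, the point is
to show `r ≤ c`. For `β < 1`, time invariance bounds the flux from `{u > β}` into `{u < β}` by the
flux from `{u ≤ β}` to `{u ≥ β}`. Over a long time a path carrying the latter passes close to some
`a ∈ A`. If `a ∈ A'`, getting there costs a factor `β`, so the flux is at most `r β`, because
`ρ ≤ r` on `{u < 1}`. If `a ∈ A''`, the flux times `β` is at most `ρ(a) u(a) ≤ c`. When `Ã''` is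
empty, each `a ∈ A''` with `u(a) < β` receives a flux of at least `ρ(a)` from a point of `A'`, where
`u = 1`, while `ρ(a) ≤ c / β` if `u(a) ≥ β`. Hence `r ≤ max (r β) (c / β)`; let `β → 1`.
-/

section BoundedSupremum

variable {ι : Type*} {s : Set ι} {f : ι → ℝ} {b : ℝ}

lemma biSup_le_of_nonneg (hb : 0 ≤ b) (h : ∀ i ∈ s, f i ≤ b) : ⨆ i ∈ s, f i ≤ b :=
  Real.iSup_le (fun i => Real.iSup_le (h i) hb) hb

lemma le_biSup_of_forall_le (h : ∀ i ∈ s, f i ≤ b) {i : ι} (hi : i ∈ s) :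
    f i ≤ ⨆ j ∈ s, f j := by
  refine le_ciSup₂ (f := fun j (_ : j ∈ s) => f j) ⟨b, ?_⟩ i hi
  rintro _ ⟨_, ⟨j, rfl⟩, ⟨hj, rfl⟩⟩
  exact h j hj

lemma biSup_nonneg (h : ∀ i ∈ s, 0 ≤ f i) : 0 ≤ ⨆ i ∈ s, f i :=
  Real.iSup_nonneg fun i => Real.iSup_nonneg (h i)

lemma biSup_le_one (h : ∀ i, f i ≤ 1) : ⨆ i ∈ s, f i ≤ 1 :=
  biSup_le_of_nonneg zero_le_one fun i _ => h i

lemma le_biSup_of_le_one (h : ∀ i, f i ≤ 1) {i : ι} (hi : i ∈ s) : f i ≤ ⨆ j ∈ s, f j :=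
  le_biSup_of_forall_le (fun j _ => h j) hi

lemma nonempty_of_biSup_pos (h : 0 < ⨆ i ∈ s, f i) : s.Nonempty := by
  by_contra! hs
  simp [hs] at h

lemma mul_biSup_le {a : ℝ} (ha : 0 ≤ a) (hb : 0 ≤ b) (h : ∀ i ∈ s, a * f i ≤ b) :
    a * ⨆ i ∈ s, f i ≤ b := by
  simp only [Real.mul_iSup_of_nonneg ha]
  exact biSup_le_of_nonneg hb h

end BoundedSupremum

namespace IsDeviabilityDensity

variable {E F : Type*} [TopologicalSpace E] [TopologicalSpace F] {p : E → ℝ}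

lemma nonneg (hp : IsDeviabilityDensity p) (x : E) : 0 ≤ p x := (hp.1 x).1

lemma le_one (hp : IsDeviabilityDensity p) (x : E) : p x ≤ 1 := (hp.1 x).2

lemma isCompact_superlevel (hp : IsDeviabilityDensity p) {γ : ℝ} (hγ : 0 < γ) :
    IsCompact {x | γ ≤ p x} := by
  rcases le_or_gt γ 1 with h | h
  · exact hp.2.2 γ ⟨hγ, h⟩
  · simp [fun x => ((hp.le_one x).trans_lt h).not_ge]

variable [T2Space E]

lemma upperSemicontinuous (hp : IsDeviabilityDensity p) : UpperSemicontinuous p := by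
  refine upperSemicontinuous_iff_isClosed_preimage.mpr fun γ => ?_
  rcases le_or_gt γ 0 with h | h
  · convert isClosed_univ
    exact eq_univ_of_forall fun x => h.trans (hp.nonneg x)
  · exact (hp.isCompact_superlevel h).isClosed

lemma exists_mem_biSup_le (hp : IsDeviabilityDensity p) {C : Set E} (hC : IsClosed C)
    (hne : C.Nonempty) : ∃ x ∈ C, ⨆ z ∈ C, p z ≤ p x := by
  set σ := ⨆ z ∈ C, p z
  have hσ0 : 0 ≤ σ := biSup_nonneg fun z _ => hp.nonneg z
  rcases hσ0.eq_or_lt with hσ0 | hσ0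
  · obtain ⟨x, hx⟩ := hne
    exact ⟨x, hx, hσ0 ▸ hp.nonneg x⟩
  have hne' : ({x | σ / 2 ≤ p x} ∩ C).Nonempty := by
    by_contra! hempty
    have : σ ≤ σ / 2 := biSup_le_of_nonneg (half_pos hσ0).le fun x hx =>
      le_of_not_ge fun hpx => hempty.le ⟨hpx, hx⟩
    linarith
  obtain ⟨x, ⟨hpx, hxC⟩, hmax⟩ := (hp.upperSemicontinuous.upperSemicontinuousOn _).exists_isMaxOn
    hne' ((hp.isCompact_superlevel (half_pos hσ0)).inter_right hC)
  refine ⟨x, hxC, biSup_le_of_nonneg (hp.nonneg x) fun z hz => ?_⟩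
  rcases le_total (σ / 2) (p z) with hz2 | hz2
  · exact hmax ⟨hz2, hz⟩
  · exact hz2.trans hpx

lemma exists_eq_one (hp : IsDeviabilityDensity p) : ∃ x, p x = 1 := by
  have h1 : ⨆ x ∈ univ, p x = 1 := by simp [hp.2.1]
  obtain ⟨x, -, hx⟩ := hp.exists_mem_biSup_le isClosed_univ
    (nonempty_of_biSup_pos (one_pos.trans_eq h1.symm))
  exact ⟨x, (hp.le_one x).antisymm (h1 ▸ hx)⟩

lemma map (hp : IsDeviabilityDensity p) [T1Space F] {f : E → F} (hf : Continuous f) :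
    IsDeviabilityDensity fun y => ⨆ x ∈ {x | f x = y}, p x := by
  have hle : ∀ y, ⨆ x ∈ {x | f x = y}, p x ≤ 1 := fun y => biSup_le_one hp.le_one
  refine ⟨fun y => ⟨biSup_nonneg fun x _ => hp.nonneg x, hle y⟩, ?_, fun γ hγ => ?_⟩
  · obtain ⟨x, hx⟩ := hp.exists_eq_one
    refine le_antisymm (Real.iSup_le hle zero_le_one) (hx.ge.trans ?_)
    exact le_ciSup_of_le ⟨1, forall_mem_range.mpr hle⟩ (f x) (le_biSup_of_le_one hp.le_one rfl)
  · convert (hp.isCompact_superlevel hγ.1).image hf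
    ext y
    refine ⟨fun hy => ?_, ?_⟩
    · obtain ⟨x, hxy, hx⟩ := hp.exists_mem_biSup_le (isClosed_singleton.preimage hf)
        (nonempty_of_biSup_pos (hγ.1.trans_le hy))
      exact ⟨x, le_trans hy hx, hxy⟩
    · rintro ⟨x, hx, rfl⟩
      exact le_trans hx (le_biSup_of_le_one (s := {z | f z = f x}) hp.le_one rfl)

end IsDeviabilityDensity

/-! ### Large deviation bounds -/

section ExponentialScale

lemma le_of_ofReal_pow_le_ofReal_pow {a b : ℝ} {n : ℕ} (hn : n ≠ 0) (hb : 0 ≤ b)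
    (h : ENNReal.ofReal (a ^ n) ≤ ENNReal.ofReal (b ^ n)) : a ≤ b :=
  le_of_pow_le_pow_left₀ hn hb ((ENNReal.ofReal_le_ofReal_iff (pow_nonneg hb n)).mp h)

lemma eventually_natCast_mul_ofReal_pow_le {a b : ℝ} (ha : 0 < a) (hab : a < b) (N : ℕ) :
    ∀ᶠ n in atTop, (N : ENNReal) * ENNReal.ofReal (a ^ n) ≤ ENNReal.ofReal (b ^ n) := by
  have h := tendsto_pow_atTop_atTop_of_one_lt ((one_lt_div ha).mpr hab)
  filter_upwards [h.eventually_ge_atTop (N : ℝ)] with n hn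
  rw [div_pow, le_div_iff₀ (pow_pos ha n)] at hn
  rw [← ENNReal.ofReal_natCast, ← ENNReal.ofReal_mul N.cast_nonneg]
  exact ENNReal.ofReal_le_ofReal hn

end ExponentialScale

section BumpIntegral

variable {E : Type*} [TopologicalSpace E] [MeasurableSpace E] {μ : Measure E} {f : C(E, ℝ)} {n : ℕ}

lemma rpow_inv_integral_pow_pow (hf : ∀ x, f x ∈ Icc (0 : ℝ) 1) (hn : n ≠ 0) :
    ((∫ x, f x ^ n ∂μ) ^ (n : ℝ)⁻¹) ^ n = ∫ x, f x ^ n ∂μ :=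
  Real.rpow_inv_natCast_pow (integral_nonneg fun x => pow_nonneg (hf x).1 n) hn

variable [OpensMeasurableSpace E] [IsFiniteMeasure μ] {V : Set E} {b : ℝ}

lemma integrable_pow_of_mem_Icc (hf : ∀ x, f x ∈ Icc (0 : ℝ) 1) (n : ℕ) :
    Integrable (fun x => f x ^ n) μ := by
  refine .of_bound (f.continuous.pow n).measurable.aestronglyMeasurable 1 (.of_forall fun x => ?_)
  rw [Real.norm_of_nonneg (pow_nonneg (hf x).1 n)]
  exact pow_le_one₀ (hf x).1 (hf x).2

lemma ofReal_pow_le_measure_of_lt_rpow_integral (hf : ∀ x, f x ∈ Icc (0 : ℝ) 1)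
    (hV : MeasurableSet V) (hfV : EqOn f 0 Vᶜ) (hn : n ≠ 0) (hb : 0 ≤ b)
    (h : b < (∫ x, f x ^ n ∂μ) ^ (n : ℝ)⁻¹) : ENNReal.ofReal (b ^ n) ≤ μ V := by
  rw [← ofReal_measureReal (measure_ne_top μ V)]
  refine ENNReal.ofReal_le_ofReal ?_
  calc b ^ n ≤ ((∫ x, f x ^ n ∂μ) ^ (n : ℝ)⁻¹) ^ n := pow_le_pow_left₀ hb h.le n
    _ = ∫ x, f x ^ n ∂μ := rpow_inv_integral_pow_pow hf hn
    _ ≤ ∫ x, V.indicator 1 x ∂μ := by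
      refine integral_mono (integrable_pow_of_mem_Icc hf n)
        ((integrable_const 1).indicator hV) fun x => ?_
      by_cases hx : x ∈ V
      · simpa [hx] using pow_le_one₀ (hf x).1 (hf x).2
      · simp [hx, hfV hx, hn]
    _ = μ.real V := integral_indicator_one hV

lemma measure_le_ofReal_pow_of_rpow_integral_lt (hf : ∀ x, f x ∈ Icc (0 : ℝ) 1)
    (hV : MeasurableSet V) (hfV : EqOn f 1 V) (hn : n ≠ 0)
    (h : (∫ x, f x ^ n ∂μ) ^ (n : ℝ)⁻¹ < b) : μ V ≤ ENNReal.ofReal (b ^ n) := by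
  rw [← ofReal_measureReal (measure_ne_top μ V)]
  refine ENNReal.ofReal_le_ofReal ?_
  calc μ.real V = ∫ x, V.indicator 1 x ∂μ := (integral_indicator_one hV).symm
    _ ≤ ∫ x, f x ^ n ∂μ := by
      refine integral_mono ((integrable_const 1).indicator hV)
        (integrable_pow_of_mem_Icc hf n) fun x => ?_
      by_cases hx : x ∈ V
      · simp [hx, hfV hx]
      · simpa [hx] using pow_nonneg (hf x).1 n
    _ = ((∫ x, f x ^ n ∂μ) ^ (n : ℝ)⁻¹) ^ n := (rpow_inv_integral_pow_pow hf hn).symm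
    _ ≤ b ^ n := by
      have hint : 0 ≤ ∫ x, f x ^ n ∂μ := integral_nonneg fun x => pow_nonneg (hf x).1 n
      exact pow_le_pow_left₀ (Real.rpow_nonneg hint _) h.le n

end BumpIntegral

namespace LDConv

variable {E : Type*} [TopologicalSpace E] [MeasurableSpace E] {Q : ℕ → Measure E} {rate : ℕ → ℕ}
  {p : E → ℝ}

lemma tendsto_of_mem_Icc (h : LDConv Q rate p) {f : C(E, ℝ)} (hf : ∀ x, f x ∈ Icc (0 : ℝ) 1) :
    Tendsto (fun n => (∫ x, f x ^ rate n ∂Q n) ^ (rate n : ℝ)⁻¹) atTop (𝓝 (⨆ x, f x * p x)) :=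
  h f f.continuous (fun x => (hf x).1) ⟨1, forall_mem_range.mpr fun x => (hf x).2⟩

variable [T4Space E] [OpensMeasurableSpace E] [∀ n, IsFiniteMeasure (Q n)]

theorem eventually_ofReal_pow_le_measure (h : LDConv Q rate p) (hp : IsDeviabilityDensity p)
    (hrate : Tendsto rate atTop atTop) {V : Set E} (hV : IsOpen V) {x : E} (hx : x ∈ V) {b : ℝ}
    (hb : 0 ≤ b) (hbx : b < p x) : ∀ᶠ n in atTop, ENNReal.ofReal (b ^ rate n) ≤ Q n V := by
  obtain ⟨f, hfV, hfx, hf⟩ := exists_continuous_zero_one_of_isClosed hV.isClosed_compl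
    (isClosed_singleton (x := x)) (by simpa using hx)
  have hsup : b < ⨆ z, f z * p z := by
    have hbdd : BddAbove (range fun z => f z * p z) :=
      ⟨1, forall_mem_range.mpr fun z => mul_le_one₀ (hf z).2 (hp.nonneg z) (hp.le_one z)⟩
    exact (hbx.trans_eq (by simp [hfx rfl])).trans_le (le_ciSup hbdd x)
  filter_upwards [(h.tendsto_of_mem_Icc hf).eventually_const_lt hsup,
    hrate.eventually_ne_atTop 0] with n hn hn0
  exact ofReal_pow_le_measure_of_lt_rpow_integral hf hV.measurableSet hfV hn0 hb hn

theorem eventually_measure_le_ofReal_pow (h : LDConv Q rate p) (hp : IsDeviabilityDensity p)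
    (hrate : Tendsto rate atTop atTop) {D : Set E} (hD : IsClosed D) {m b : ℝ} (hm : 0 ≤ m)
    (hpD : ∀ x ∈ D, p x ≤ m) (hmb : m < b) :
    ∀ᶠ n in atTop, Q n D ≤ ENNReal.ofReal (b ^ rate n) := by
  obtain ⟨m', hmm', hm'b⟩ := exists_between hmb
  have hm' : 0 < m' := hm.trans_lt hmm'
  have hdisj : Disjoint {x | m' ≤ p x} D :=
    disjoint_left.mpr fun x hx hxD => (hmm'.trans_le hx).not_ge (hpD x hxD)
  obtain ⟨f, hfK, hfD, hf⟩ := exists_continuous_zero_one_of_isClosed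
    (hp.isCompact_superlevel hm').isClosed hD hdisj
  have hsup : ⨆ x, f x * p x < b := by
    refine (Real.iSup_le (fun x => ?_) hm'.le).trans_lt hm'b
    rcases le_or_gt m' (p x) with hx | hx
    · simpa [hfK hx] using hm'.le
    · exact (mul_le_of_le_one_left (hp.nonneg x) (hf x).2).trans hx.le
  filter_upwards [(h.tendsto_of_mem_Icc hf).eventually_lt_const hsup,
    hrate.eventually_ne_atTop 0] with n hn hn0
  exact measure_le_ofReal_pow_of_rpow_integral_lt hf hD.measurableSet hfD hn0 hn

lemma exists_isOpen_eventually_measure_le_ofReal_pow (h : LDConv Q rate p)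
    (hp : IsDeviabilityDensity p) (hrate : Tendsto rate atTop atTop) {x : E} {b : ℝ}
    (hb : p x < b) :
    ∃ W, IsOpen W ∧ x ∈ W ∧ ∀ᶠ n in atTop, Q n W ≤ ENNReal.ofReal (b ^ rate n) := by
  obtain ⟨m, hxm, hmb⟩ := exists_between hb
  obtain ⟨C, hCx, hC, hCm⟩ := exists_mem_nhds_isClosed_subset (hp.upperSemicontinuous x m hxm)
  refine ⟨interior C, isOpen_interior, mem_interior_iff_mem_nhds.mpr hCx, ?_⟩
  filter_upwards [h.eventually_measure_le_ofReal_pow hp hrate hC ((hp.nonneg x).trans hxm.le)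
    (fun z hz => (hCm hz).le) hmb] with n hn
  exact (measure_mono interior_subset).trans hn

end LDConv

section UniformEvent

lemma exists_isOpen_eventually_forall_of_forall_seq {E : Type*} [TopologicalSpace E]
    [FirstCountableTopology E] {R : ℕ → E → Prop} {x : E}
    (h : ∀ xs : ℕ → E, Tendsto xs atTop (𝓝 x) → ∀ᶠ n in atTop, R n (xs n)) :
    ∃ W, IsOpen W ∧ x ∈ W ∧ ∀ᶠ n in atTop, ∀ z ∈ W, R n z := by
  obtain ⟨U, hU⟩ := (𝓝 x).exists_antitone_basis
  suffices h' : ∃ k, ∀ᶠ n in atTop, ∀ z ∈ U k, R n z by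
    obtain ⟨k, hk⟩ := h'
    exact ⟨interior (U k), isOpen_interior, mem_interior_iff_mem_nhds.mpr (hU.mem k),
      hk.mono fun n hn z hz => hn z (interior_subset hz)⟩
  by_contra! hcon
  obtain ⟨φ, hφ, hbad⟩ := extraction_forall_of_frequently hcon
  choose z hzU hzR using hbad
  -- the counterexamples, placed at the times `φ k`, form one sequence converging to `x`
  let xs : ℕ → E := Function.extend φ z fun _ => x
  have hxs : Tendsto xs atTop (𝓝 x) := by
    intro V hV
    have hfin : {k | z k ∉ V}.Finite := by
      have := hU.tendsto hzU hV
      rwa [← Nat.cofinite_eq_atTop] at this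
    rw [← Nat.cofinite_eq_atTop]
    refine (hfin.image φ).subset fun n hn => ?_
    by_cases hnφ : ∃ k, φ k = n
    · obtain ⟨k, rfl⟩ := hnφ
      refine mem_image_of_mem φ fun hk => hn ?_
      simpa [xs, hφ.injective.extend_apply] using hk
    · exact (hn (by simpa [xs, Function.extend_apply' _ _ _ hnφ] using mem_of_mem_nhds hV)).elim
  obtain ⟨k, hk⟩ := (hφ.tendsto_atTop.eventually (h xs hxs)).exists
  exact hzR k (by simpa [xs, hφ.injective.extend_apply] using hk)

end UniformEvent

lemma setLIntegral_biUnion_finset_le {E ι : Type*} [MeasurableSpace E] {μ : Measure E}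
    (t : Finset ι) (W : ι → Set E) (f : E → ENNReal) :
    ∫⁻ x in ⋃ i ∈ t, W i, f x ∂μ ≤ ∑ i ∈ t, ∫⁻ x in W i, f x ∂μ := by
  calc ∫⁻ x in ⋃ i ∈ t, W i, f x ∂μ = ∫⁻ x in ⋃ i : t, W i, f x ∂μ := by
        rw [iUnion_subtype]
    _ ≤ ∑' i : t, ∫⁻ x in W i, f x ∂μ := lintegral_iUnion_le _ _
    _ = ∑ i ∈ t, ∫⁻ x in W i, f x ∂μ := t.tsum_subtype fun i => ∫⁻ x in W i, f x ∂μ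

lemma setLIntegral_le_card_add_one_mul {E ι : Type*} [MeasurableSpace E] {μ : Measure E}
    {t : Finset ι} {W : ι → Set E} {C : Set E} {f : E → ENNReal} {b : ENNReal} (hf : ∀ x, f x ≤ 1)
    (hW : ∀ i ∈ t, ∫⁻ x in W i, f x ∂μ ≤ b) (hC : μ (C \ ⋃ i ∈ t, W i) ≤ b) :
    ∫⁻ x in C, f x ∂μ ≤ (t.card + 1 : ℕ) * b := by
  calc ∫⁻ x in C, f x ∂μ
      ≤ ∫⁻ x in (⋃ i ∈ t, W i) ∪ (C \ ⋃ i ∈ t, W i), f x ∂μ :=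
        lintegral_mono_set (by rw [union_sdiff_self]; exact subset_union_right)
    _ ≤ ∑ i ∈ t, ∫⁻ x in W i, f x ∂μ + ∫⁻ x in C \ ⋃ i ∈ t, W i, f x ∂μ := by
        refine (lintegral_union_le _ _ _).trans ?_
        gcongr
        exact setLIntegral_biUnion_finset_le t W f
    _ ≤ ∑ i ∈ t, ∫⁻ x in W i, f x ∂μ + ∫⁻ _ in C \ ⋃ i ∈ t, W i, 1 ∂μ := by
        gcongr with x
        exact hf x
    _ ≤ ∑ _ ∈ t, b + b := by
        rw [setLIntegral_one]
        exact add_le_add (Finset.sum_le_sum hW) hC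
    _ = (t.card + 1 : ℕ) * b := by
        rw [Finset.sum_const, nsmul_eq_mul, Nat.cast_succ, add_one_mul]

open ProbabilityTheory (Kernel IsFiniteKernel IsMarkovKernel)

/-- Continuous large deviation convergence, at rate `n`, of the kernels `κ n` to the family of
deviability densities `q x`: the starting points may converge along with `n`. -/
structure LDContinuous {E F : Type*} [TopologicalSpace E] [TopologicalSpace F]
    [MeasurableSpace E] [MeasurableSpace F] (κ : ℕ → Kernel E F) (q : E → F → ℝ) : Prop where
  isDeviabilityDensity : ∀ x, IsDeviabilityDensity (q x)
  ldConv : ∀ x (xs : ℕ → E), Tendsto xs atTop (𝓝 x) →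
    LDConv (fun n => κ n (xs n)) (fun n => n) (q x)

namespace LDContinuous

variable {E F : Type*} [TopologicalSpace E] [FirstCountableTopology E] [MeasurableSpace E]
  [TopologicalSpace F] [T4Space F] [MeasurableSpace F] [OpensMeasurableSpace F]
  {κ : ℕ → Kernel E F} {q : E → F → ℝ} {x : E} {b : ℝ}

lemma exists_isOpen_eventually_ofReal_pow_le [∀ n, IsFiniteKernel (κ n)] (hκ : LDContinuous κ q)
    {V : Set F} (hV : IsOpen V) {y : F} (hy : y ∈ V) (hb : 0 ≤ b) (hby : b < q x y) :
    ∃ W, IsOpen W ∧ x ∈ W ∧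
      ∀ᶠ n in atTop, ∀ z ∈ W, ENNReal.ofReal (b ^ n) ≤ κ n z V :=
  exists_isOpen_eventually_forall_of_forall_seq fun xs hxs =>
    (hκ.ldConv x xs hxs).eventually_ofReal_pow_le_measure (hκ.isDeviabilityDensity x)
      tendsto_id hV hy hb hby

lemma exists_isOpen_eventually_le_ofReal_pow [∀ n, IsFiniteKernel (κ n)] (hκ : LDContinuous κ q)
    {D : Set F} (hD : IsClosed D) {m : ℝ} (hm : 0 ≤ m) (hqD : ∀ y ∈ D, q x y ≤ m) (hmb : m < b) :
    ∃ W, IsOpen W ∧ x ∈ W ∧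
      ∀ᶠ n in atTop, ∀ z ∈ W, κ n z D ≤ ENNReal.ofReal (b ^ n) :=
  exists_isOpen_eventually_forall_of_forall_seq fun xs hxs =>
    (hκ.ldConv x xs hxs).eventually_measure_le_ofReal_pow (hκ.isDeviabilityDensity x)
      tendsto_id hD hm hqD hmb

variable [T4Space E] [OpensMeasurableSpace E] {Q : ℕ → Measure E} [∀ k, IsFiniteMeasure (Q k)]
  {φ : ℕ → ℕ} {ρ : E → ℝ}

theorem eventually_ofReal_pow_le_flux [∀ n, IsFiniteKernel (κ n)] (hκ : LDContinuous κ q)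
    (hρ : IsDeviabilityDensity ρ) (hQ : LDConv Q φ ρ) (hφ : Tendsto φ atTop atTop)
    {U : Set E} {V : Set F} (hU : IsOpen U) (hV : IsOpen V) {y : F} (hx : x ∈ U) (hy : y ∈ V)
    {a : ℝ} (ha : 0 ≤ a) (hax : a < ρ x) (hb : 0 ≤ b) (hby : b < q x y) :
    ∀ᶠ k in atTop, ENNReal.ofReal ((a * b) ^ φ k) ≤ ∫⁻ z in U, κ (φ k) z V ∂Q k := by
  obtain ⟨W, hW, hxW, hκW⟩ := hκ.exists_isOpen_eventually_ofReal_pow_le hV hy hb hby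
  filter_upwards [hφ.eventually hκW,
    hQ.eventually_ofReal_pow_le_measure hρ hφ (hU.inter hW) ⟨hx, hxW⟩ ha hax] with k hκk hQk
  calc ENNReal.ofReal ((a * b) ^ φ k)
      = ENNReal.ofReal (b ^ φ k) * ENNReal.ofReal (a ^ φ k) := by
        rw [← ENNReal.ofReal_mul (pow_nonneg hb _), mul_pow, mul_comm]
    _ ≤ ENNReal.ofReal (b ^ φ k) * Q k (U ∩ W) := by gcongr
    _ = ∫⁻ _ in U ∩ W, ENNReal.ofReal (b ^ φ k) ∂Q k := (setLIntegral_const _ _).symm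
    _ ≤ ∫⁻ z in U ∩ W, κ (φ k) z V ∂Q k :=
        setLIntegral_mono' (hU.inter hW).measurableSet fun _ hz => hκk _ hz.2
    _ ≤ ∫⁻ z in U, κ (φ k) z V ∂Q k := lintegral_mono_set inter_subset_left

lemma exists_isOpen_eventually_flux_le_ofReal_pow [∀ n, IsFiniteKernel (κ n)]
    (hκ : LDContinuous κ q) (hρ : IsDeviabilityDensity ρ) (hQ : LDConv Q φ ρ)
    (hφ : Tendsto φ atTop atTop) {D : Set F} (hD : IsClosed D) {m c : ℝ} (hm : 0 ≤ m)
    (hmD : ∀ y ∈ D, ρ x * q x y ≤ m) (hmc : m < c) :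
    ∃ W, IsOpen W ∧ x ∈ W ∧
      ∀ᶠ k in atTop, ∫⁻ z in W, κ (φ k) z D ∂Q k ≤ ENNReal.ofReal (c ^ φ k) := by
  have hq := hκ.isDeviabilityDensity x
  have hsup0 : 0 ≤ ⨆ y ∈ D, q x y := biSup_nonneg fun y _ => hq.nonneg y
  obtain ⟨a, ha, b, hb, hab⟩ : ∃ a > ρ x, ∃ b > ⨆ y ∈ D, q x y, a * b < c := by
    by_contra! hcon
    exact hmc.not_ge ((le_mul_of_forall_lt₀ hcon).trans (mul_biSup_le (hρ.nonneg x) hm hmD))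
  have ha0 : 0 ≤ a := (hρ.nonneg x).trans ha.le
  have hb0 : 0 ≤ b := hsup0.trans hb.le
  obtain ⟨W₁, hW₁, hxW₁, hκW⟩ := hκ.exists_isOpen_eventually_le_ofReal_pow hD hsup0
    (fun y hy => le_biSup_of_le_one hq.le_one hy) hb
  obtain ⟨W₂, hW₂, hxW₂, hQW⟩ := hQ.exists_isOpen_eventually_measure_le_ofReal_pow hρ hφ ha
  refine ⟨W₁ ∩ W₂, hW₁.inter hW₂, ⟨hxW₁, hxW₂⟩, ?_⟩
  filter_upwards [hφ.eventually hκW, hQW] with k hκk hQk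
  calc ∫⁻ z in W₁ ∩ W₂, κ (φ k) z D ∂Q k
      ≤ ∫⁻ _ in W₁ ∩ W₂, ENNReal.ofReal (b ^ φ k) ∂Q k :=
        setLIntegral_mono' (hW₁.inter hW₂).measurableSet fun _ hz => hκk _ hz.1
    _ = ENNReal.ofReal (b ^ φ k) * Q k (W₁ ∩ W₂) := setLIntegral_const _ _
    _ ≤ ENNReal.ofReal (b ^ φ k) * ENNReal.ofReal (a ^ φ k) := by
        gcongr
        exact (measure_mono inter_subset_right).trans hQk
    _ = ENNReal.ofReal ((a * b) ^ φ k) := by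
        rw [← ENNReal.ofReal_mul (pow_nonneg hb0 _), mul_pow, mul_comm]
    _ ≤ ENNReal.ofReal (c ^ φ k) :=
        ENNReal.ofReal_le_ofReal (pow_le_pow_left₀ (mul_nonneg ha0 hb0) hab.le _)

theorem eventually_flux_le_ofReal_pow [∀ n, IsMarkovKernel (κ n)] (hκ : LDContinuous κ q)
    (hρ : IsDeviabilityDensity ρ) (hQ : LDConv Q φ ρ) (hφ : Tendsto φ atTop atTop)
    {C : Set E} {D : Set F} (hC : IsClosed C) (hD : IsClosed D) {m c : ℝ} (hm : 0 ≤ m)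
    (hmCD : ∀ x ∈ C, ∀ y ∈ D, ρ x * q x y ≤ m) (hmc : m < c) :
    ∀ᶠ k in atTop, ∫⁻ z in C, κ (φ k) z D ∂Q k ≤ ENNReal.ofReal (c ^ φ k) := by
  obtain ⟨m', hmm', hm'c⟩ := exists_between hmc
  obtain ⟨d, hm'd, hdc⟩ := exists_between hm'c
  have hm' : 0 < m' := hm.trans_lt hmm'
  choose! W hWo hxW hW using fun x hx => hκ.exists_isOpen_eventually_flux_le_ofReal_pow hρ hQ hφ
    hD hm (hmCD x hx) (hmm'.trans hm'd)
  obtain ⟨t, htC, ht⟩ := ((hρ.isCompact_superlevel hm').inter_right hC).elim_nhds_subcover W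
    fun x hx => (hWo x hx.2).mem_nhds (hxW x hx.2)
  have hrest : IsClosed (C \ ⋃ x ∈ t, W x) :=
    hC.sdiff (isOpen_biUnion fun x hx => hWo x (htC x hx).2)
  have hρrest : ∀ x ∈ C \ ⋃ x ∈ t, W x, ρ x ≤ m' := fun x hx =>
    le_of_not_ge fun hρx => hx.2 (ht ⟨hρx, hx.1⟩)
  filter_upwards [(Finset.eventually_all t).mpr fun x hx => hW x (htC x hx).2,
    hQ.eventually_measure_le_ofReal_pow hρ hφ hrest hm'.le hρrest hm'd,
    hφ.eventually (eventually_natCast_mul_ofReal_pow_le (hm'.trans hm'd) hdc (t.card + 1))]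
    with k hcover hout habsorb
  exact (setLIntegral_le_card_add_one_mul (fun _ => prob_le_one) hcover hout).trans habsorb

end LDContinuous

lemma setLIntegral_compl_eq_of_invariant {E : Type*} [MeasurableSpace E] {κ : Kernel E E}
    [IsMarkovKernel κ] {μ : Measure E} [IsFiniteMeasure μ] (h : κ.Invariant μ) {Γ : Set E}
    (hΓ : MeasurableSet Γ) : ∫⁻ z in Γᶜ, κ z Γ ∂μ = ∫⁻ z in Γ, κ z Γᶜ ∂μ := by
  have hin : μ Γ = ∫⁻ z in Γ, κ z Γ ∂μ + ∫⁻ z in Γᶜ, κ z Γ ∂μ := by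
    rw [lintegral_add_compl _ hΓ, ← Measure.bind_apply hΓ κ.aemeasurable, h.def]
  have hout : μ Γ = ∫⁻ z in Γ, κ z Γ ∂μ + ∫⁻ z in Γ, κ z Γᶜ ∂μ := by
    rw [← lintegral_add_left (κ.measurable_coe hΓ)]
    simp [measure_add_measure_compl hΓ]
  have hfin : ∫⁻ z in Γ, κ z Γ ∂μ ≠ ⊤ :=
    ne_top_of_le_ne_top (measure_ne_top μ Γ) (hin ▸ le_self_add)
  exact (ENNReal.add_right_inj hfin).mp (hin.symm.trans hout)

/-! ### Stationary densities -/

/-- The maxitive analogue, for a density `ρ`, of being stationary under the transition densities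
`q`: transporting `ρ` by `q` does not increase it, and the flux into an open set is at most the
flux out of it. The closures leave room for large deviation bounds on open and closed sets. -/
structure IsMaxitiveStationary {E : Type*} [TopologicalSpace E] (ρ : E → ℝ) (q : E → E → ℝ) :
    Prop where
  isDeviabilityDensity : IsDeviabilityDensity ρ
  mul_le : ∀ x y, ρ x * q x y ≤ ρ y
  inflow_le : ∀ U, IsOpen U → ∀ m, (∀ x ∈ closure U, ∀ y ∈ Uᶜ, ρ x * q x y ≤ m) →
    ∀ x ∈ (closure U)ᶜ, ∀ y ∈ U, ρ x * q x y ≤ m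

namespace LDContinuous

variable {E : Type*} [TopologicalSpace E] [FirstCountableTopology E] [T4Space E]
  [MeasurableSpace E] [OpensMeasurableSpace E] {κ : ℕ → Kernel E E} [∀ n, IsMarkovKernel (κ n)]
  {q : E → E → ℝ} {Q : ℕ → Measure E} [∀ k, IsFiniteMeasure (Q k)] {φ : ℕ → ℕ} {ρ : E → ℝ}

lemma mul_le_of_invariant (hκ : LDContinuous κ q) (hρ : IsDeviabilityDensity ρ)
    (hQ : LDConv Q φ ρ) (hφ : Tendsto φ atTop atTop) (hinv : ∀ k, (κ (φ k)).Invariant (Q k))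
    (x y : E) : ρ x * q x y ≤ ρ y := by
  refine le_of_forall_gt_imp_ge_of_dense fun c hyc => ?_
  have hc0 : 0 ≤ c := (hρ.nonneg y).trans hyc.le
  obtain ⟨W, hW, hyW, hQW⟩ := hQ.exists_isOpen_eventually_measure_le_ofReal_pow hρ hφ hyc
  refine mul_le_of_forall_lt_of_nonneg (hρ.nonneg x) hc0 fun a ha hax b hb hby => ?_
  obtain ⟨k, hflux, hk, hk0⟩ := ((hκ.eventually_ofReal_pow_le_flux hρ hQ hφ isOpen_univ hW
    (mem_univ x) hyW ha hax hb hby).and (hQW.and (hφ.eventually_ne_atTop 0))).exists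
  refine le_of_ofReal_pow_le_ofReal_pow hk0 hc0 (hflux.trans ?_)
  rwa [setLIntegral_univ, ← Measure.bind_apply hW.measurableSet (κ (φ k)).aemeasurable,
    (hinv k).def]

lemma inflow_le_of_invariant (hκ : LDContinuous κ q) (hρ : IsDeviabilityDensity ρ)
    (hQ : LDConv Q φ ρ) (hφ : Tendsto φ atTop atTop) (hinv : ∀ k, (κ (φ k)).Invariant (Q k))
    {U : Set E} (hU : IsOpen U) {m : ℝ} (hm : ∀ x ∈ closure U, ∀ y ∈ Uᶜ, ρ x * q x y ≤ m)
    {x y : E} (hx : x ∈ (closure U)ᶜ) (hy : y ∈ U) : ρ x * q x y ≤ m := by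
  have hxU : (closure U)ᶜ ⊆ Uᶜ := compl_subset_compl.mpr subset_closure
  have hm0 : 0 ≤ m := (mul_nonneg (hρ.nonneg y) ((hκ.isDeviabilityDensity y).nonneg x)).trans
    (hm y (subset_closure hy) x (hxU hx))
  refine le_of_forall_gt_imp_ge_of_dense fun c hmc => ?_
  have hc0 : 0 ≤ c := hm0.trans hmc.le
  refine mul_le_of_forall_lt_of_nonneg (hρ.nonneg x) hc0 fun a ha hax b hb hby => ?_
  obtain ⟨k, hin, hout, hk⟩ := ((hκ.eventually_ofReal_pow_le_flux hρ hQ hφ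
    isClosed_closure.isOpen_compl hU hx hy ha hax hb hby).and ((hκ.eventually_flux_le_ofReal_pow
      hρ hQ hφ isClosed_closure hU.isClosed_compl hm0 hm hmc).and
        (hφ.eventually_ne_atTop 0))).exists
  refine le_of_ofReal_pow_le_ofReal_pow hk hc0 ?_
  calc ENNReal.ofReal ((a * b) ^ φ k)
      ≤ ∫⁻ z in (closure U)ᶜ, κ (φ k) z U ∂Q k := hin
    _ ≤ ∫⁻ z in Uᶜ, κ (φ k) z U ∂Q k := lintegral_mono_set hxU
    _ = ∫⁻ z in U, κ (φ k) z Uᶜ ∂Q k :=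
        setLIntegral_compl_eq_of_invariant (hinv k) hU.measurableSet
    _ ≤ ∫⁻ z in closure U, κ (φ k) z Uᶜ ∂Q k := lintegral_mono_set subset_closure
    _ ≤ ENNReal.ofReal (c ^ φ k) := hout

theorem isMaxitiveStationary (hκ : LDContinuous κ q) (hρ : IsDeviabilityDensity ρ)
    (hQ : LDConv Q φ ρ) (hφ : Tendsto φ atTop atTop) (hinv : ∀ k, (κ (φ k)).Invariant (Q k)) :
    IsMaxitiveStationary ρ q where
  isDeviabilityDensity := hρ
  mul_le := hκ.mul_le_of_invariant hρ hQ hφ hinv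
  inflow_le _ hU _ hm _ hx _ hy := hκ.inflow_le_of_invariant hρ hQ hφ hinv hU hm hx hy

end LDContinuous

/-! ### Maxitive Markov families -/

section Concatenation

variable {E : Type*} [MetricSpace E] {s : ℝ≥0} {X Y : C(ℝ≥0, E)}

/-- The path that follows `X` up to time `s` and `Y` afterwards. -/
def pconcat (s : ℝ≥0) (X Y : C(ℝ≥0, E)) (h : X s = Y 0) : C(ℝ≥0, E) where
  toFun t := if t ≤ s then X t else Y (t - s)
  continuous_toFun := by
    refine Continuous.if_le (by fun_prop) (by fun_prop) continuous_id continuous_const ?_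
    rintro t rfl
    simpa using h

lemma pconcat_of_le (h : X s = Y 0) {t : ℝ≥0} (ht : t ≤ s) : pconcat s X Y h t = X t :=
  if_pos ht

lemma pconcat_add (h : X s = Y 0) (t : ℝ≥0) : pconcat s X Y h (s + t) = Y t := by
  rcases eq_or_ne t 0 with rfl | ht
  · rw [add_zero, pconcat_of_le h le_rfl, h]
  · simp [pconcat, ht]

end Concatenation

/-- The density, under `Px x`, of the initial piece of the path `X` up to time `s`: the first
factor of the maxitive Markov property. -/
def prefixDen {E : Type*} [MetricSpace E] (Px : E → C(ℝ≥0, E) → ℝ) (x : E) (X : C(ℝ≥0, E))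
    (s : ℝ≥0) : ℝ :=
  ⨆ X' ∈ {X' : C(ℝ≥0, E) | ∀ u ≤ s, X' u = X u}, Px x X'

/-- A family `Px x` of deviability densities on the paths issued from `x`, with the maxitive
Markov property (2.3). -/
structure IsMaxitiveMarkov {E : Type*} [MetricSpace E] (Px : E → C(ℝ≥0, E) → ℝ) : Prop where
  dev : ∀ x, IsDeviabilityDensity (Px x)
  start : ∀ x (X : C(ℝ≥0, E)), X 0 ≠ x → Px x X = 0
  markov : ∀ x (X : C(ℝ≥0, E)) (s : ℝ≥0),
    Px x X = prefixDen Px x X s * Px (X s) (pshift s X)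

namespace IsMaxitiveMarkov

variable {E : Type*} [MetricSpace E] {Px : E → C(ℝ≥0, E) → ℝ} {x y z : E}

lemma isDeviabilityDensity_transDen (h : IsMaxitiveMarkov Px) (x : E) (t : ℝ≥0) :
    IsDeviabilityDensity (transDen Px x t) :=
  (h.dev x).map (continuous_eval_const t)

lemma transDen_nonneg (h : IsMaxitiveMarkov Px) (x : E) (t : ℝ≥0) (y : E) :
    0 ≤ transDen Px x t y :=
  (h.isDeviabilityDensity_transDen x t).nonneg y

lemma transDen_le_one (h : IsMaxitiveMarkov Px) (x : E) (t : ℝ≥0) (y : E) :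
    transDen Px x t y ≤ 1 :=
  (h.isDeviabilityDensity_transDen x t).le_one y

lemma le_transDen (h : IsMaxitiveMarkov Px) (x : E) (X : C(ℝ≥0, E)) (t : ℝ≥0) :
    Px x X ≤ transDen Px x t (X t) :=
  le_biSup_of_le_one (s := {X' : C(ℝ≥0, E) | X' t = X t}) (h.dev x).le_one rfl

lemma exists_transDen_le (h : IsMaxitiveMarkov Px) {t : ℝ≥0} (hpos : 0 < transDen Px x t y) :
    ∃ X : C(ℝ≥0, E), X t = y ∧ transDen Px x t y ≤ Px x X :=
  (h.dev x).exists_mem_biSup_le (isClosed_singleton.preimage (continuous_eval_const t))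
    (nonempty_of_biSup_pos hpos)

lemma transDen_mul_transDen_le (h : IsMaxitiveMarkov Px) (x y z : E) (s t : ℝ≥0) :
    transDen Px x s y * transDen Px y t z ≤ transDen Px x (s + t) z := by
  rcases (h.transDen_nonneg x s y).eq_or_lt with hxy | hxy
  · simpa [← hxy] using h.transDen_nonneg x (s + t) z
  rcases (h.transDen_nonneg y t z).eq_or_lt with hyz | hyz
  · simpa [← hyz] using h.transDen_nonneg x (s + t) z
  obtain ⟨X, rfl, hX⟩ := h.exists_transDen_le hxy
  obtain ⟨Y, rfl, hY⟩ := h.exists_transDen_le hyz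
  have hXY : X s = Y 0 := by
    by_contra hne
    exact (hyz.trans_le hY).ne' (h.start _ Y (Ne.symm hne))
  set Z := pconcat s X Y hXY with hZ
  have hZs : Z s = X s := pconcat_of_le hXY le_rfl
  have hshift : pshift s Z = Y := ContinuousMap.ext (pconcat_add hXY)
  calc transDen Px x s (X s) * transDen Px (X s) t (Y t)
      ≤ Px x X * Px (X s) Y := mul_le_mul hX hY hyz.le ((h.dev x).nonneg X)
    _ ≤ prefixDen Px x Z s * Px (X s) Y := by
        refine mul_le_mul_of_nonneg_right ?_ ((h.dev _).nonneg Y)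
        exact le_biSup_of_le_one (s := {X' : C(ℝ≥0, E) | ∀ u ≤ s, X' u = Z u}) (h.dev x).le_one
          fun u hu => (pconcat_of_le hXY hu).symm
    _ = Px x Z := by rw [h.markov x Z s, hZs, hshift]
    _ ≤ transDen Px x (s + t) (Y t) := by
        simpa only [hZ, pconcat_add] using h.le_transDen x Z (s + t)

lemma prefixDen_le_transDen (h : IsMaxitiveMarkov Px) (x : E) (X : C(ℝ≥0, E)) (s : ℝ≥0) :
    prefixDen Px x X s ≤ transDen Px x s (X s) :=
  biSup_le_of_nonneg (h.transDen_nonneg _ _ _) fun X' hX' => hX' s le_rfl ▸ h.le_transDen x X' s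

lemma le_prefixDen (h : IsMaxitiveMarkov Px) (x : E) (X : C(ℝ≥0, E)) (s : ℝ≥0) :
    Px x X ≤ prefixDen Px x X s :=
  le_biSup_of_le_one (s := {X' : C(ℝ≥0, E) | ∀ u ≤ s, X' u = X u}) (h.dev x).le_one
    fun _ _ => rfl

lemma le_transDen_mul_transDen (h : IsMaxitiveMarkov Px) (x : E) (X : C(ℝ≥0, E)) {s t : ℝ≥0}
    (hst : s ≤ t) : Px x X ≤ transDen Px x s (X s) * transDen Px (X s) (t - s) (X t) := by
  have hXt : pshift s X (t - s) = X t := congrArg X (add_tsub_cancel_of_le hst)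
  calc Px x X = prefixDen Px x X s * Px (X s) (pshift s X) := h.markov x X s
    _ ≤ transDen Px x s (X s) * transDen Px (X s) (t - s) (pshift s X (t - s)) :=
        mul_le_mul (h.prefixDen_le_transDen x X s) (h.le_transDen _ _ _)
          ((h.dev _).nonneg _) (h.transDen_nonneg _ _ _)
    _ = transDen Px x s (X s) * transDen Px (X s) (t - s) (X t) := by rw [hXt]

lemma tendsto_prefixDen (h : IsMaxitiveMarkov Px) (x : E) (X : C(ℝ≥0, E)) :
    Tendsto (prefixDen Px x X) atTop (𝓝 (Px x X)) := by
  have hclosed : ∀ s : ℝ≥0, IsClosed {X' : C(ℝ≥0, E) | ∀ u ≤ s, X' u = X u} := fun s => by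
    simp only [ofPred_forall]
    exact isClosed_biInter fun u _ => isClosed_eq (continuous_eval_const u) continuous_const
  choose F hFX hF using fun s => (h.dev x).exists_mem_biSup_le (hclosed s) ⟨X, fun _ _ => rfl⟩
  have hlim : Tendsto F atTop (𝓝 X) := by
    rw [ContinuousMap.tendsto_nhds_compactOpen]
    intro K hK U _ hXU
    obtain ⟨b, hb⟩ := hK.bddAbove
    filter_upwards [eventually_ge_atTop b] with s hs u hu
    rw [hFX s u ((hb hu).trans hs)]
    exact hXU hu
  refine tendsto_order.mpr ⟨fun c hc => .of_forall fun s => hc.trans_le (h.le_prefixDen x X s),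
    fun c hc => ?_⟩
  filter_upwards [hlim.eventually ((h.dev x).upperSemicontinuous X c hc)] with s hs
  exact (hF s).trans_lt hs

lemma tendsto_pshift (h : IsMaxitiveMarkov Px) {X : C(ℝ≥0, E)} (hX : 0 < Px x X) :
    Tendsto (fun s => Px (X s) (pshift s X)) atTop (𝓝 1) := by
  have hdiv := (tendsto_const_nhds (x := Px x X)).div (h.tendsto_prefixDen x X) hX.ne'
  rw [div_self hX.ne'] at hdiv
  refine hdiv.congr fun s => ?_
  rw [Pi.div_apply, div_eq_iff (hX.trans_le (h.le_prefixDen x X s)).ne', mul_comm]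
  exact h.markov x X s

end IsMaxitiveMarkov

/-- The part of (2.2), (2.4) and (2.5) that makes the set `A` attract every path of positive
density. -/
structure IsAttracting {E : Type*} [MetricSpace E] (Px : E → C(ℝ≥0, E) → ℝ) (A : Set E) :
    Prop extends IsMaxitiveMarkov Px where
  usc : UpperSemicontinuous (fun q : E × C(ℝ≥0, E) => Px q.1 q.2)
  cpt : ∀ K : Set E, IsCompact K → ∀ γ ∈ Ioc (0 : ℝ) 1,
    IsCompact (⋃ x ∈ K, {X : C(ℝ≥0, E) | γ ≤ Px x X})
  attract : ∀ x (X : C(ℝ≥0, E)), Px x X = 1 → (⨅ t : ℝ≥0, infDist (X t) A) = 0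
  tight : ∀ K₁ : Set E, IsCompact K₁ → ∀ ε : ℝ, 0 < ε → ∃ K₂ : Set E, IsCompact K₂ ∧
    limsup (fun t : ℝ≥0 => ⨆ x ∈ K₁, ⨆ y ∈ K₂ᶜ, transDen Px x t y) atTop < ε

namespace IsAttracting

variable {E : Type*} [MetricSpace E] {Px : E → C(ℝ≥0, E) → ℝ} {A : Set E} {x : E}

lemma exists_infDist_lt_of_eq_one (h : IsAttracting Px A) {X : C(ℝ≥0, E)} (hX : Px x X = 1)
    {δ : ℝ} (hδ : 0 < δ) : ∃ t, infDist (X t) A < δ :=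
  exists_lt_of_ciInf_lt ((h.attract x X hX).trans_lt hδ)

lemma exists_isCompact_eventually_mem (h : IsAttracting Px A) (x : E) {γ : ℝ} (hγ : 0 < γ) :
    ∃ K, IsCompact K ∧ ∀ᶠ s in atTop, ∀ X, γ ≤ Px x X → X s ∈ K := by
  obtain ⟨K, hK, hlim⟩ := h.tight {x} isCompact_singleton γ hγ
  refine ⟨K, hK, ?_⟩
  have hle : ∀ (t : ℝ≥0) (z : E), ⨆ y ∈ Kᶜ, transDen Px z t y ≤ 1 := fun t z =>
    biSup_le_one (h.transDen_le_one z t)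
  have hbdd : IsBoundedUnder (· ≤ ·) atTop
      fun t : ℝ≥0 => ⨆ z ∈ ({x} : Set E), ⨆ y ∈ Kᶜ, transDen Px z t y :=
    isBoundedUnder_of ⟨1, fun t => biSup_le_one (hle t)⟩
  filter_upwards [eventually_lt_of_limsup_lt hlim hbdd] with s hs X hX
  by_contra hXs
  refine hs.not_ge ?_
  calc γ ≤ Px x X := hX
    _ ≤ transDen Px x s (X s) := h.le_transDen x X s
    _ ≤ ⨆ y ∈ Kᶜ, transDen Px x s y := le_biSup_of_le_one (h.transDen_le_one x s) hXs
    _ ≤ ⨆ z ∈ ({x} : Set E), ⨆ y ∈ Kᶜ, transDen Px z s y := le_biSup_of_le_one (hle s) rfl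

lemma exists_mapClusterPt_pshift (h : IsAttracting Px A) {X : C(ℝ≥0, E)} (hX : 0 < Px x X) :
    ∃ Y, MapClusterPt Y atTop (fun s => pshift s X) ∧ Px (Y 0) Y = 1 := by
  obtain ⟨K, hK, hXK⟩ := h.exists_isCompact_eventually_mem x hX
  have hlim := h.tendsto_pshift hX
  obtain ⟨Y, -, hY⟩ := (h.cpt K hK (1 / 2) (by norm_num)).exists_mapClusterPt_of_frequently
    (l := atTop) (f := fun s => pshift s X) (by
      refine Eventually.frequently ?_
      filter_upwards [hXK, hlim.eventually_const_le one_half_lt_one] with s hs hXs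
      exact mem_iUnion₂.mpr ⟨X s, hs X le_rfl, hXs⟩)
  refine ⟨Y, hY, ((h.dev _).le_one Y).antisymm (le_of_not_gt fun hlt => ?_)⟩
  obtain ⟨c, hYc, hc1⟩ := exists_between hlt
  have hev : Continuous fun Z : C(ℝ≥0, E) => (Z 0, Z) := by fun_prop
  have hlow : ∀ᶠ Z in 𝓝 Y, Px (Z 0) Z < c := (hev.tendsto Y).eventually (h.usc (Y 0, Y) c hYc)
  obtain ⟨s, hs, hs'⟩ := ((hY.frequently hlow).and_eventually
    (hlim.eventually_const_lt hc1)).exists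
  have hpshift : pshift s X 0 = X s := congrArg X (add_zero s)
  exact lt_asymm hs' (hpshift ▸ hs)

lemma exists_infDist_lt (h : IsAttracting Px A) {X : C(ℝ≥0, E)} (hX : 0 < Px x X) {δ : ℝ}
    (hδ : 0 < δ) : ∃ s, infDist (X s) A < δ := by
  obtain ⟨Y, hY, hY1⟩ := h.exists_mapClusterPt_pshift hX
  obtain ⟨t, ht⟩ := h.exists_infDist_lt_of_eq_one hY1 hδ
  have hcont : Continuous fun Z : C(ℝ≥0, E) => infDist (Z t) A :=
    (continuous_infDist_pt A).comp (continuous_eval_const t)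
  obtain ⟨s, hs⟩ := (hY.frequently (hcont.continuousAt.eventually_lt_const ht)).exists
  exact ⟨s + t, hs⟩

theorem exists_forall_exists_infDist_lt (h : IsAttracting Px A) {K : Set E} (hK : IsCompact K)
    {γ δ : ℝ} (hγ : 0 < γ) (hδ : 0 < δ) :
    ∃ t₀ : ℝ≥0, ∀ x ∈ K, ∀ X, γ ≤ Px x X → ∃ s ≤ t₀, infDist (X s) A < δ := by
  let avoid (t : ℝ≥0) : Set C(ℝ≥0, E) := {X | ∀ s ≤ t, δ ≤ infDist (X s) A}
  have hclosed : ∀ t, IsClosed (avoid t) := fun t => by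
    simp only [avoid, ofPred_forall]
    exact isClosed_biInter fun s _ => isClosed_le continuous_const
      ((continuous_infDist_pt A).comp (continuous_eval_const s))
  have hanti : Antitone avoid := fun t t' htt' X hX s hs => hX s (hs.trans htt')
  have hmin : 0 < min γ 1 := lt_min hγ one_pos
  have hempty : (⋃ x ∈ K, {X | min γ 1 ≤ Px x X}) ∩ ⋂ t, avoid t = ∅ := by
    refine eq_empty_of_forall_notMem ?_
    rintro X ⟨hXK, hXavoid⟩
    obtain ⟨x, -, hX⟩ := mem_iUnion₂.mp hXK
    obtain ⟨s, hs⟩ := h.exists_infDist_lt (hmin.trans_le hX) hδ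
    exact hs.not_ge (mem_iInter.mp hXavoid s s le_rfl)
  obtain ⟨t, ht⟩ := (h.cpt K hK _ ⟨hmin, min_le_right γ 1⟩).elim_directed_family_closed avoid
    hclosed hempty (directed_of_isDirected_le hanti)
  refine ⟨t, fun x hx X hX => ?_⟩
  by_contra! hcon
  exact ht.le ⟨mem_iUnion₂.mpr ⟨x, hx, (min_le_left γ 1).trans hX⟩, hcon⟩

end IsAttracting

/-- An attracting set of equilibria to and from whose neighbourhoods one moves at almost no cost,
in a space where nearby points communicate at almost no cost: (2.2), (2.3), (2.4)(i), (ii), (iv),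
(v) and (2.5). -/
structure IsEquilibriumSkeleton {E : Type*} [MetricSpace E] (Px : E → C(ℝ≥0, E) → ℝ)
    (A : Set E) : Prop extends IsAttracting Px A where
  equil : ∀ a ∈ A, Px a (ContinuousMap.const ℝ≥0 a) = 1
  nearA : ∀ ε : ℝ, 0 < ε → ∃ δ : ℝ, 0 < δ ∧ ∀ x : E, infDist x A < δ →
    ∃ s₀ s₁ : ℝ≥0, 0 < s₀ ∧ 0 < s₁ ∧ ∃ a ∈ A,
      1 - ε < transDen Px x s₀ a ∧ 1 - ε < transDen Px a s₁ x
  localMove : ∀ x : E, ∀ ε : ℝ, 0 < ε → ∃ δ : ℝ, 0 < δ ∧ ∃ t₀ t₁ : ℝ≥0,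
    ∀ x' : E, dist x x' < δ →
      1 - ε < transDen Px x t₀ x' ∧ 1 - ε < transDen Px x' t₁ x

namespace IsEquilibriumSkeleton

variable {E : Type*} [MetricSpace E] {Px : E → C(ℝ≥0, E) → ℝ} {A : Set E}

lemma transDen_self (h : IsEquilibriumSkeleton Px A) {a : E} (ha : a ∈ A) (t : ℝ≥0) :
    transDen Px a t a = 1 :=
  (h.transDen_le_one a t a).antisymm
    ((h.equil a ha).ge.trans (h.le_transDen a (ContinuousMap.const ℝ≥0 a) t))

theorem exists_forall_exists_le_transDen_mul_transDen (h : IsEquilibriumSkeleton Px A)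
    {K : Set E} (hK : IsCompact K) {γ θ : ℝ} (hγ : 0 < γ) (hθ0 : 0 ≤ θ) (hθ1 : θ < 1) :
    ∃ t₀ : ℝ≥0, ∀ t ≥ t₀, ∀ x ∈ K, ∀ y, γ ≤ transDen Px x t y →
      ∃ a ∈ A, ∃ s s' : ℝ≥0,
        θ * transDen Px x t y ≤ transDen Px x s a * transDen Px a s' y := by
  obtain ⟨δ, hδ, hnear⟩ := h.nearA ((1 - θ) / 2) (by linarith)
  obtain ⟨t₀, hit⟩ := h.exists_forall_exists_infDist_lt hK hγ hδ
  refine ⟨t₀, fun t ht x hx y hxy => ?_⟩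
  obtain ⟨X, rfl, hX⟩ := h.exists_transDen_le (hγ.trans_le hxy)
  obtain ⟨s, hs, hsA⟩ := hit x hx X (hxy.trans hX)
  obtain ⟨s₀, s₁, -, -, a, ha, hto, hfrom⟩ := hnear (X s) hsA
  refine ⟨a, ha, s + s₀, s₁ + (t - s), ?_⟩
  set η := 1 - (1 - θ) / 2
  have hη0 : 0 ≤ η := by simp only [η]; linarith
  have hθη : θ ≤ η * η := by simp only [η]; nlinarith [sq_nonneg (1 - θ)]
  have hpre := h.transDen_nonneg x s (X s)
  have hpost := h.transDen_nonneg (X s) (t - s) (X t)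
  calc θ * transDen Px x t (X t)
      ≤ η * η * (transDen Px x s (X s) * transDen Px (X s) (t - s) (X t)) :=
        mul_le_mul hθη (hX.trans (h.le_transDen_mul_transDen x X (hs.trans ht)))
          (h.transDen_nonneg _ _ _) (mul_nonneg hη0 hη0)
    _ = transDen Px x s (X s) * η * (η * transDen Px (X s) (t - s) (X t)) := by ring
    _ ≤ transDen Px x s (X s) * transDen Px (X s) s₀ a *
          (transDen Px a s₁ (X s) * transDen Px (X s) (t - s) (X t)) := by
        gcongr
        exact mul_nonneg hpre (h.transDen_nonneg _ _ _)
    _ ≤ transDen Px x (s + s₀) a * transDen Px a (s₁ + (t - s)) (X t) :=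
        mul_le_mul (h.transDen_mul_transDen_le _ _ _ _ _) (h.transDen_mul_transDen_le _ _ _ _ _)
          (mul_nonneg (h.transDen_nonneg _ _ _) hpost) (h.transDen_nonneg _ _ _)

end IsEquilibriumSkeleton

/-- `PL x y` is the long-time limit `Π(x,y)` of the transition densities `Π_{x,t}(y)`. -/
def IsLimitTransDen {E : Type*} [MetricSpace E] (Px : E → C(ℝ≥0, E) → ℝ) (PL : E → E → ℝ) :
    Prop :=
  ∀ x y, Tendsto (fun t : ℝ≥0 => transDen Px x t y) atTop (𝓝 (PL x y))

/-- `Π(x,B)`, the limiting density with which the set `B` is reached from `x`. -/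
def reachDen {E : Type*} (PL : E → E → ℝ) (B : Set E) (x : E) : ℝ :=
  ⨆ y ∈ B, PL x y

namespace IsLimitTransDen

variable {E : Type*} [MetricSpace E] {Px : E → C(ℝ≥0, E) → ℝ} {PL : E → E → ℝ} {A B : Set E}
  {ρ : E → ℝ}

lemma nonneg (hPL : IsLimitTransDen Px PL) (h : IsMaxitiveMarkov Px) (x y : E) : 0 ≤ PL x y :=
  ge_of_tendsto' (hPL x y) fun t => h.transDen_nonneg x t y

lemma le_one (hPL : IsLimitTransDen Px PL) (h : IsMaxitiveMarkov Px) (x y : E) : PL x y ≤ 1 :=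
  le_of_tendsto' (hPL x y) fun t => h.transDen_le_one x t y

lemma transDen_mul_le (hPL : IsLimitTransDen Px PL) (h : IsMaxitiveMarkov Px) (x y z : E)
    (s : ℝ≥0) : transDen Px x s y * PL y z ≤ PL x z :=
  le_of_tendsto_of_tendsto' ((hPL y z).const_mul (transDen Px x s y))
    ((hPL x z).comp (tendsto_atTop_mono (fun _ => le_add_self) tendsto_id))
    fun t => h.transDen_mul_transDen_le x y z s t

lemma self_eq_one (hPL : IsLimitTransDen Px PL) (h : IsEquilibriumSkeleton Px A) {a : E}
    (ha : a ∈ A) : PL a a = 1 :=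
  tendsto_nhds_unique (hPL a a) (tendsto_const_nhds.congr fun t => (h.transDen_self ha t).symm)

lemma mul_le (hPL : IsLimitTransDen Px PL)
    (hρ : ∀ t, IsMaxitiveStationary ρ fun x => transDen Px x t) (x y : E) :
    ρ x * PL x y ≤ ρ y :=
  le_of_tendsto' ((hPL x y).const_mul (ρ x)) fun t => (hρ t).mul_le x y

lemma reachDen_nonneg (hPL : IsLimitTransDen Px PL) (h : IsMaxitiveMarkov Px) (B : Set E)
    (x : E) : 0 ≤ reachDen PL B x :=
  biSup_nonneg fun y _ => hPL.nonneg h x y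

lemma reachDen_le_one (hPL : IsLimitTransDen Px PL) (h : IsMaxitiveMarkov Px) (B : Set E)
    (x : E) : reachDen PL B x ≤ 1 :=
  biSup_le_one fun y => hPL.le_one h x y

lemma le_reachDen (hPL : IsLimitTransDen Px PL) (h : IsMaxitiveMarkov Px) (x : E) {y : E}
    (hy : y ∈ B) : PL x y ≤ reachDen PL B x :=
  le_biSup_of_le_one (hPL.le_one h x) hy

lemma transDen_mul_reachDen_le (hPL : IsLimitTransDen Px PL) (h : IsMaxitiveMarkov Px)
    (B : Set E) (x y : E) (s : ℝ≥0) :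
    transDen Px x s y * reachDen PL B y ≤ reachDen PL B x :=
  mul_biSup_le (h.transDen_nonneg x s y) (hPL.reachDen_nonneg h B x) fun z hz =>
    (hPL.transDen_mul_le h x y z s).trans (hPL.le_reachDen h x hz)

lemma reachDen_eq_one (hPL : IsLimitTransDen Px PL) (h : IsEquilibriumSkeleton Px A) {a : E}
    (haA : a ∈ A) (haB : a ∈ B) : reachDen PL B a = 1 :=
  (hPL.reachDen_le_one h.toIsMaxitiveMarkov B a).antisymm
    ((hPL.self_eq_one h haA).ge.trans (hPL.le_reachDen h.toIsMaxitiveMarkov a haB))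

lemma transDen_le_reachDen (hPL : IsLimitTransDen Px PL) (h : IsEquilibriumSkeleton Px A) (x : E)
    {a : E} (haA : a ∈ A) (haB : a ∈ B) (s : ℝ≥0) : transDen Px x s a ≤ reachDen PL B x := by
  simpa only [hPL.reachDen_eq_one h haA haB, mul_one] using
    hPL.transDen_mul_reachDen_le h.toIsMaxitiveMarkov B x a s

lemma continuous_reachDen (hPL : IsLimitTransDen Px PL) (h : IsEquilibriumSkeleton Px A)
    (B : Set E) : Continuous (reachDen PL B) := by
  refine Metric.continuous_iff'.mpr fun x ε hε => ?_
  obtain ⟨δ, hδ, t₀, t₁, hmove⟩ := h.localMove x ε hε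
  have hlower : ∀ u v s, 1 - ε < transDen Px u s v → reachDen PL B v - reachDen PL B u < ε := by
    intro u v s huv
    calc reachDen PL B v - reachDen PL B u
        ≤ reachDen PL B v - transDen Px u s v * reachDen PL B v :=
          sub_le_sub_left (hPL.transDen_mul_reachDen_le h.toIsMaxitiveMarkov B u v s) _
      _ = (1 - transDen Px u s v) * reachDen PL B v := by ring
      _ ≤ 1 - transDen Px u s v :=
          mul_le_of_le_one_right (sub_nonneg.mpr (h.transDen_le_one u s v))
            (hPL.reachDen_le_one h.toIsMaxitiveMarkov B v)
      _ < ε := sub_lt_comm.mp huv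
  filter_upwards [Metric.ball_mem_nhds x hδ] with x' hx'
  obtain ⟨hto, hfrom⟩ := hmove x' (mem_ball'.mp hx')
  exact abs_sub_lt_iff.mpr ⟨hlower x x' t₀ hto, hlower x' x t₁ hfrom⟩

end IsLimitTransDen

/-! ### Flux balance across a level set of `Π(·,B)` -/

section FluxBalance

variable {E : Type*} [MetricSpace E] {Px : E → C(ℝ≥0, E) → ℝ} {PL : E → E → ℝ} {B C : Set E}
  {ρ : E → ℝ} {β m : ℝ} {x y a : E}

lemma mul_reachDen_le_maxFlux (hPL : IsLimitTransDen Px PL) (h : IsMaxitiveMarkov Px)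
    (hρ : IsDeviabilityDensity ρ) (hx : x ∈ C) :
    ρ x * reachDen PL B x ≤ maxFlux PL ρ C B :=
  le_biSup_of_le_one (fun z => mul_le_one₀ (hρ.le_one z) (hPL.reachDen_nonneg h B z)
    (hPL.reachDen_le_one h B z)) hx

lemma maxFlux_nonneg (hPL : IsLimitTransDen Px PL) (h : IsMaxitiveMarkov Px)
    (hρ : IsDeviabilityDensity ρ) : 0 ≤ maxFlux PL ρ C B :=
  biSup_nonneg fun z _ => mul_nonneg (hρ.nonneg z) (hPL.reachDen_nonneg h B z)

lemma le_biSup_of_reachDen_lt_one (hPL : IsLimitTransDen Px PL)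
    (h : IsEquilibriumSkeleton Px (B ∪ C))
    (hρ : ∀ t, IsMaxitiveStationary ρ fun x => transDen Px x t) (hx : reachDen PL B x < 1) :
    ρ x ≤ ⨆ a ∈ C, ρ a := by
  have hdev := (hρ 0).isDeviabilityDensity
  refine le_of_forall_lt_imp_le_of_dense fun c hc => ?_
  obtain ⟨θ, ⟨hθ, hcθ⟩, hθ1⟩ : ∃ θ, (reachDen PL B x < θ ∧ c < ρ x * θ) ∧ θ < 1 := by
    have hc1 : ∀ᶠ θ in 𝓝 (1 : ℝ), c < ρ x * θ :=
      ((continuous_const_mul (ρ x)).tendsto' 1 (ρ x) (mul_one _)).eventually_const_lt hc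
    have hlim : ∀ᶠ θ in 𝓝[<] (1 : ℝ), (reachDen PL B x < θ ∧ c < ρ x * θ) ∧ θ < 1 :=
      (((eventually_gt_nhds hx).and hc1).filter_mono nhdsWithin_le_nhds).and self_mem_nhdsWithin
    exact hlim.exists
  have hθ0 : 0 < θ := (hPL.reachDen_nonneg h.toIsMaxitiveMarkov B x).trans_lt hθ
  obtain ⟨t, ht⟩ := h.exists_forall_exists_le_transDen_mul_transDen (isCompact_singleton (x := x))
    one_pos hθ0.le hθ1
  obtain ⟨y, hy⟩ := (h.isDeviabilityDensity_transDen x t).exists_eq_one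
  obtain ⟨a, ha, s, s', hvia⟩ := ht t le_rfl x rfl y hy.ge
  have hxa : θ ≤ transDen Px x s a := by
    rw [hy, mul_one] at hvia
    exact hvia.trans (mul_le_of_le_one_right (h.transDen_nonneg _ _ _) (h.transDen_le_one _ _ _))
  have haC : a ∈ C := ha.resolve_left fun haB =>
    (hθ.trans_le hxa).not_ge (hPL.transDen_le_reachDen h x ha haB s)
  calc c ≤ ρ x * θ := hcθ.le
    _ ≤ ρ x * transDen Px x s a := mul_le_mul_of_nonneg_left hxa (hdev.nonneg x)
    _ ≤ ρ a := (hρ s).mul_le x a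
    _ ≤ ⨆ a ∈ C, ρ a := le_biSup_of_le_one hdev.le_one haC

lemma mul_transDen_mul_transDen_le_max (hPL : IsLimitTransDen Px PL)
    (h : IsEquilibriumSkeleton Px (B ∪ C))
    (hρ : ∀ t, IsMaxitiveStationary ρ fun x => transDen Px x t) (hβ0 : 0 < β) (hβ1 : β < 1)
    (hx : reachDen PL B x ≤ β) (hy : β ≤ reachDen PL B y) (ha : a ∈ B ∪ C) (s s' : ℝ≥0) :
    ρ x * (transDen Px x s a * transDen Px a s' y) ≤
      max ((⨆ c ∈ C, ρ c) * β) (maxFlux PL ρ C B / β) := by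
  have hdev := (hρ 0).isDeviabilityDensity
  have hM := h.toIsMaxitiveMarkov
  have hxa := h.transDen_nonneg x s a
  have hay := h.transDen_nonneg a s' y
  rcases ha with haB | haC
  · refine le_max_of_le_left ?_
    calc ρ x * (transDen Px x s a * transDen Px a s' y) ≤ ρ x * transDen Px x s a :=
          mul_le_mul_of_nonneg_left (mul_le_of_le_one_right hxa (h.transDen_le_one a s' y))
            (hdev.nonneg x)
      _ ≤ (⨆ c ∈ C, ρ c) * β :=
          mul_le_mul (le_biSup_of_reachDen_lt_one hPL h hρ (hx.trans_lt hβ1))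
            ((hPL.transDen_le_reachDen h x (.inl haB) haB s).trans hx) hxa
            (biSup_nonneg fun c _ => hdev.nonneg c)
  · refine le_max_of_le_right ((le_div_iff₀ hβ0).mpr ?_)
    calc ρ x * (transDen Px x s a * transDen Px a s' y) * β
        = ρ x * transDen Px x s a * (transDen Px a s' y * β) := by ring
      _ ≤ ρ a * (transDen Px a s' y * reachDen PL B y) :=
          mul_le_mul ((hρ s).mul_le x a) (mul_le_mul_of_nonneg_left hy hay)
            (mul_nonneg hay hβ0.le) (hdev.nonneg a)
      _ ≤ ρ a * reachDen PL B a :=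
          mul_le_mul_of_nonneg_left (hPL.transDen_mul_reachDen_le hM B a y s') (hdev.nonneg a)
      _ ≤ maxFlux PL ρ C B := mul_reachDen_le_maxFlux hPL hM hdev haC

lemma eventually_mul_transDen_le (hPL : IsLimitTransDen Px PL)
    (h : IsEquilibriumSkeleton Px (B ∪ C))
    (hρ : ∀ t, IsMaxitiveStationary ρ fun x => transDen Px x t) (hβ0 : 0 < β) (hβ1 : β < 1)
    (hm : max ((⨆ c ∈ C, ρ c) * β) (maxFlux PL ρ C B / β) < m) :
    ∀ᶠ t in atTop, ∀ x y, reachDen PL B x ≤ β → β ≤ reachDen PL B y →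
      ρ x * transDen Px x t y ≤ m := by
  have hdev := (hρ 0).isDeviabilityDensity
  set M := max ((⨆ c ∈ C, ρ c) * β) (maxFlux PL ρ C B / β)
  have hM0 : 0 ≤ M := le_max_of_le_right
    (div_nonneg (maxFlux_nonneg hPL h.toIsMaxitiveMarkov hdev) hβ0.le)
  have hm0 : 0 < m := hM0.trans_lt hm
  obtain ⟨θ, hMθ, hθ1⟩ := exists_between ((div_lt_one hm0).mpr hm)
  have hθ0 : 0 < θ := (div_nonneg hM0 hm0.le).trans_lt hMθ
  obtain ⟨t₀, hvia⟩ := h.exists_forall_exists_le_transDen_mul_transDen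
    (hdev.isCompact_superlevel hm0) hm0 hθ0.le hθ1
  filter_upwards [eventually_ge_atTop t₀] with t ht x y hx hy
  by_contra! hflux
  have hρx : m ≤ ρ x :=
    hflux.le.trans (mul_le_of_le_one_right (hdev.nonneg x) (h.transDen_le_one x t y))
  have hxy : m ≤ transDen Px x t y :=
    hflux.le.trans (mul_le_of_le_one_left (h.transDen_nonneg x t y) (hdev.le_one x))
  obtain ⟨a, ha, s, s', hsplit⟩ := hvia t ht x hρx y hxy
  have : M < M := calc
    M < m * θ := (div_lt_iff₀' hm0).mp hMθ
    _ ≤ ρ x * transDen Px x t y * θ := mul_le_mul_of_nonneg_right hflux.le hθ0.le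
    _ = ρ x * (θ * transDen Px x t y) := by ring
    _ ≤ ρ x * (transDen Px x s a * transDen Px a s' y) :=
        mul_le_mul_of_nonneg_left hsplit (hdev.nonneg x)
    _ ≤ M := mul_transDen_mul_transDen_le_max hPL h hρ hβ0 hβ1 hx hy ha s s'
  exact this.false

theorem mul_le_max_of_reachDen_lt (hPL : IsLimitTransDen Px PL)
    (h : IsEquilibriumSkeleton Px (B ∪ C))
    (hρ : ∀ t, IsMaxitiveStationary ρ fun x => transDen Px x t) (hβ0 : 0 < β) (hβ1 : β < 1)
    (hx : β < reachDen PL B x) (hy : reachDen PL B y < β) :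
    ρ x * PL x y ≤ max ((⨆ c ∈ C, ρ c) * β) (maxFlux PL ρ C B / β) := by
  have hu := hPL.continuous_reachDen h B
  have hcl : closure {z | reachDen PL B z < β} ⊆ {z | reachDen PL B z ≤ β} :=
    closure_lt_subset_le hu continuous_const
  refine le_of_forall_gt_imp_ge_of_dense fun m hm => ?_
  refine le_of_tendsto ((hPL x y).const_mul (ρ x)) ?_
  filter_upwards [eventually_mul_transDen_le hPL h hρ hβ0 hβ1 hm] with t ht
  exact (hρ t).inflow_le _ (isOpen_lt hu continuous_const) m
    (fun z hz w hw => ht z w (hcl hz) (not_lt.mp hw)) x (fun hxc => (hcl hxc).not_gt hx) y hy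

lemma biSup_le_max_mul_maxFlux_div (hPL : IsLimitTransDen Px PL)
    (h : IsEquilibriumSkeleton Px (B ∪ C))
    (hρ : ∀ t, IsMaxitiveStationary ρ fun x => transDen Px x t)
    (hfed : ∀ a ∈ C, ∃ b ∈ B, ρ a ≤ ρ b * PL b a) (hβ0 : 0 < β) (hβ1 : β < 1) :
    ⨆ a ∈ C, ρ a ≤ max ((⨆ a ∈ C, ρ a) * β) (maxFlux PL ρ C B / β) := by
  have hdev := (hρ 0).isDeviabilityDensity
  have hM := h.toIsMaxitiveMarkov
  refine biSup_le_of_nonneg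
    (le_max_of_le_right (div_nonneg (maxFlux_nonneg hPL hM hdev) hβ0.le)) fun a ha => ?_
  rcases lt_or_ge (reachDen PL B a) β with haβ | haβ
  · obtain ⟨b, hb, hba⟩ := hfed a ha
    refine hba.trans (mul_le_max_of_reachDen_lt hPL h hρ hβ0 hβ1 ?_ haβ)
    exact hβ1.trans_eq (hPL.reachDen_eq_one h (.inl hb) hb).symm
  · refine le_max_of_le_right ((le_div_iff₀ hβ0).mpr ?_)
    exact (mul_le_mul_of_nonneg_left haβ (hdev.nonneg a)).trans
      (mul_reachDen_le_maxFlux hPL hM hdev ha)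

theorem biSup_le_maxFlux_left (hPL : IsLimitTransDen Px PL)
    (h : IsEquilibriumSkeleton Px (B ∪ C))
    (hρ : ∀ t, IsMaxitiveStationary ρ fun x => transDen Px x t)
    (hfed : ∀ a ∈ C, ∃ b ∈ B, ρ a ≤ ρ b * PL b a) :
    ⨆ a ∈ C, ρ a ≤ maxFlux PL ρ C B := by
  have hc0 : 0 ≤ maxFlux PL ρ C B :=
    maxFlux_nonneg hPL h.toIsMaxitiveMarkov (hρ 0).isDeviabilityDensity
  by_contra! hlt
  have hr0 := hc0.trans_lt hlt
  obtain ⟨β, hβ, hβ1⟩ := exists_between ((div_lt_one hr0).mpr hlt)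
  have hβ0 : 0 < β := (div_nonneg hc0 hr0.le).trans_lt hβ
  refine (biSup_le_max_mul_maxFlux_div hPL h hρ hfed hβ0 hβ1).not_gt (max_lt ?_ ?_)
  · exact mul_lt_of_lt_one_right hr0 hβ1
  · exact (div_lt_comm₀ hr0 hβ0).mp hβ

lemma mul_reachDen_le_biSup (hPL : IsLimitTransDen Px PL)
    (hρ : ∀ t, IsMaxitiveStationary ρ fun x => transDen Px x t) (x : E) :
    ρ x * reachDen PL C x ≤ ⨆ a ∈ C, ρ a := by
  have hdev := (hρ 0).isDeviabilityDensity
  exact mul_biSup_le (hdev.nonneg x) (biSup_nonneg fun a _ => hdev.nonneg a) fun y hy =>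
    (hPL.mul_le hρ x y).trans (le_biSup_of_le_one hdev.le_one hy)

lemma maxFlux_le_biSup_right (hPL : IsLimitTransDen Px PL)
    (hρ : ∀ t, IsMaxitiveStationary ρ fun x => transDen Px x t) :
    maxFlux PL ρ B C ≤ ⨆ a ∈ C, ρ a :=
  biSup_le_of_nonneg (biSup_nonneg fun a _ => (hρ 0).isDeviabilityDensity.nonneg a) fun x _ =>
    mul_reachDen_le_biSup hPL hρ x

lemma maxFlux_le_biSup_left (hPL : IsLimitTransDen Px PL) (h : IsMaxitiveMarkov Px)
    (hρ : IsDeviabilityDensity ρ) : maxFlux PL ρ C B ≤ ⨆ a ∈ C, ρ a :=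
  biSup_le_of_nonneg (biSup_nonneg fun a _ => hρ.nonneg a) fun x hx =>
    (mul_le_of_le_one_right (hρ.nonneg x) (hPL.reachDen_le_one h B x)).trans
      (le_biSup_of_le_one hρ.le_one hx)

lemma biSup_le_maxFlux_right (hPL : IsLimitTransDen Px PL) (h : IsMaxitiveMarkov Px)
    (hρ : IsDeviabilityDensity ρ) (hfed : ∀ a ∈ C, ∃ b ∈ B, ρ a ≤ ρ b * PL b a) :
    ⨆ a ∈ C, ρ a ≤ maxFlux PL ρ B C := by
  refine biSup_le_of_nonneg (maxFlux_nonneg hPL h hρ) fun a ha => ?_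
  obtain ⟨b, hb, hab⟩ := hfed a ha
  calc ρ a ≤ ρ b * PL b a := hab
    _ ≤ ρ b * reachDen PL C b := mul_le_mul_of_nonneg_left (hPL.le_reachDen h b ha) (hρ.nonneg b)
    _ ≤ maxFlux PL ρ B C := mul_reachDen_le_maxFlux hPL h hρ hb

end FluxBalance

lemma kernel_invariant_of_measure_eq_lintegral {E : Type*} [MeasurableSpace E] {κ : Kernel E E}
    {μ : Measure E} (h : ∀ Γ, MeasurableSet Γ → μ Γ = ∫⁻ x, κ x Γ ∂μ) : κ.Invariant μ :=
  Measure.ext fun Γ hΓ => by rw [Measure.bind_apply hΓ κ.aemeasurable, ← h Γ hΓ]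

lemma DevSetup.isEquilibriumSkeleton {E : Type*} [MetricSpace E] {Px : E → C(ℝ≥0, E) → ℝ}
    {A : Set E} (h : DevSetup E Px A) : IsEquilibriumSkeleton Px A where
  __ := h

theorem stmt13_general
    {Px : S → C(ℝ≥0, S) → ℝ} {A' A'' : Set S} (h : IsEquilibriumSkeleton Px (A' ∪ A''))
    {PL : S → S → ℝ} (hPL : IsLimitTransDen Px PL)
    {κ : ℕ → ℝ≥0 → Kernel S S} (hκ : ∀ n t, IsMarkovKernel (κ n t))
    (hκLD : ∀ (t : ℝ≥0) (x : S) (xs : ℕ → S), Tendsto xs atTop (𝓝 x) →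
      LDConv (fun n => κ n t (xs n)) (fun n => n) (transDen Px x t))
    {φ : ℕ → ℕ} (hφ : Tendsto φ atTop atTop) {Q : ℕ → Measure S}
    (hQ : ∀ k, IsFiniteMeasure (Q k)) (hinv : ∀ k t, (κ (φ k) t).Invariant (Q k))
    {ρ : S → ℝ} (hρ : IsDeviabilityDensity ρ) (hQρ : LDConv Q φ ρ)
    (hempty : {a ∈ A'' | ∀ a' ∈ A', ρ a' * PL a' a < ρ a} = ∅) :
    maxFlux PL ρ A'' A' = (⨆ a ∈ A'', ρ a) ∧ maxFlux PL ρ A' A'' = (⨆ a ∈ A'', ρ a) := by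
  have hstat (t : ℝ≥0) : IsMaxitiveStationary ρ fun x => transDen Px x t :=
    LDContinuous.isMaxitiveStationary ⟨fun x => h.isDeviabilityDensity_transDen x t, hκLD t⟩
      hρ hQρ hφ fun k => hinv k t
  have hfed : ∀ a ∈ A'', ∃ a' ∈ A', ρ a ≤ ρ a' * PL a' a := fun a ha => by
    by_contra! hlt
    exact hempty.le ⟨ha, hlt⟩
  have hM := h.toIsMaxitiveMarkov
  exact ⟨(maxFlux_le_biSup_left hPL hM hρ).antisymm (biSup_le_maxFlux_left hPL h hstat hfed),
    (maxFlux_le_biSup_right hPL hstat).antisymm (biSup_le_maxFlux_right hPL hM hρ hfed)⟩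

theorem stmt13
    (Px : S → C(ℝ≥0, S) → ℝ) (A : Set S) (hyp : DevSetup S Px A)
    (PL : S → S → ℝ)
    (hPL : ∀ x y : S, Tendsto (fun t : ℝ≥0 => transDen Px x t y) atTop (𝓝 (PL x y)))
    (κ : ℕ → ℝ≥0 → ProbabilityTheory.Kernel S S)
    (hκ : ∀ n t, ProbabilityTheory.IsMarkovKernel (κ n t))
    (P : ℕ → Measure S) (hP : ∀ n, IsProbabilityMeasure (P n))
    (hinv : ∀ n (t : ℝ≥0) (Γ : Set S), MeasurableSet Γ →
      P n Γ = ∫⁻ x, κ n t x Γ ∂(P n))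
    (hκLD : ∀ (t : ℝ≥0) (x : S) (xs : ℕ → S), Tendsto xs atTop (𝓝 x) →
      LDConv (fun n => κ n t (xs n)) (fun n => n) (fun y => transDen Px x t y))
    (ρ : S → ℝ) (hρdev : IsDeviabilityDensity ρ)
    (φ : ℕ → ℕ) (hφ : StrictMono φ)
    (hρ : LDConv (fun k => P (φ k)) φ ρ)
    (A' A'' : Set S) (hA'ne : A'.Nonempty) (hA''ne : A''.Nonempty)
    (hdisj : Disjoint A' A'') (huni : A' ∪ A'' = A)
    (hempty : {a ∈ A'' | ∀ a' ∈ A', ρ a' * PL a' a < ρ a} = ∅) :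
    maxFlux PL ρ A'' A' = (⨆ a ∈ A'', ρ a) ∧
    maxFlux PL ρ A' A'' = (⨆ a ∈ A'', ρ a) :=
  stmt13_general (huni ▸ hyp.isEquilibriumSkeleton) hPL hκ hκLD hφ.tendsto_atTop
    (fun _ => inferInstance) (fun k t => kernel_invariant_of_measure_eq_lintegral (hinv (φ k) t))
    hρdev hρ hempty
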